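/- arXiv:2201.03854 — 4 statements merged into one kernel-verified Lean document; each statement's English description precedes it below -/
import Mathlib

section
/- For real constants α, β, a, b, r with αb − aβ ≠ 0, the bracket of the family 𝔤₅(α, a, β, b, r) satisfies the Jacobi identity [E,[F,G]] + [F,[G,E]] + [G,[E,F]] = 0 for all E, F, G ∈ 𝔤, so 𝔤₅(α, a, β, b, r) is a Lie algebra. -/
noncomputable section

/-- The bilinear antisymmetric bracket on ℝ⁴ determined by the structure constants. -/
def bk (α a β b r : ℝ) (E F : Fin 4 → ℝ) : Fin 4 → ℝ :=
  (E 0 * F 1 - E 1 * F 0) • (![-r, 0, -(a * r ^ 2 / (2 * (α * b - a * β))), α * r ^ 2 / (2 * (α * b - a * β))] : Fin 4 → ℝ) +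
  (E 0 * F 2 - E 2 * F 0) • (![-α, -β, r * (β * b - α * a) / (2 * (α * b - a * β)), r * (α ^ 2 - β ^ 2) / (2 * (α * b - a * β))] : Fin 4 → ℝ) +
  (E 0 * F 3 - E 3 * F 0) • (![-a, -b, r * (b ^ 2 - a ^ 2) / (2 * (α * b - a * β)), r * (α * a - β * b) / (2 * (α * b - a * β))] : Fin 4 → ℝ) +
  (E 1 * F 2 - E 2 * F 1) • (![β, -α, r * (α * b + β * a) / (2 * (α * b - a * β)), -(r * α * β / (α * b - a * β))] : Fin 4 → ℝ) +
  (E 1 * F 3 - E 3 * F 1) • (![b, -a, r * a * b / (α * b - a * β), -(r * (α * b + β * a) / (2 * (α * b - a * β)))] : Fin 4 → ℝ) +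
  (E 2 * F 3 - E 3 * F 2) • (![0, 0, 0, 0] : Fin 4 → ℝ)

set_option maxHeartbeats 4000000 in
theorem g5_jacobi (α a β b r : ℝ) (hd : α * b - a * β ≠ 0) :
    ∀ E F G : Fin 4 → ℝ,
      bk α a β b r E (bk α a β b r F G) + bk α a β b r F (bk α a β b r G E) +
        bk α a β b r G (bk α a β b r E F) = 0 := by
  intro E F G
  obtain ⟨D, hD⟩ : ∃ D, D = α * b - a * β := ⟨_, rfl⟩
  rw [← hD] at hd
  funext i
  fin_cases i <;>
    simp [bk] <;> simp only [← hD] <;>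
    field_simp <;> simp only [hD] <;> ring

end
end

section
/- For the family 𝔤₅(α, a, β, b, r) with αb − aβ ≠ 0 and r ≠ 0, the structure J is almost Kähler, i.e. dω(E,F,G) = 0 for all E, F, G ∈ 𝔤, if and only if r² = 4(αb − aβ). -/
noncomputable section

/-- The almost Hermitian structure J with J(X)=Y, J(Y)=-X, J(Z)=W, J(W)=-Z. -/
def Jm (E : Fin 4 → ℝ) : Fin 4 → ℝ := ![-E 1, E 0, -E 3, E 2]

/-- The standard inner product, making {X,Y,Z,W} orthonormal. -/
def ip (E F : Fin 4 → ℝ) : ℝ := E 0 * F 0 + E 1 * F 1 + E 2 * F 2 + E 3 * F 3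

/-- The Kähler form ω(E,F) = ⟨JE, F⟩. -/
def om (E F : Fin 4 → ℝ) : ℝ := ip (Jm E) F

/-- The left-invariant exterior derivative of the Kähler form. -/
def dom (α a β b r : ℝ) (E F G : Fin 4 → ℝ) : ℝ :=
  -om (bk α a β b r E F) G - om (bk α a β b r F G) E - om (bk α a β b r G E) F

theorem dom_formula (α a β b r : ℝ) (hd : α * b - a * β ≠ 0) (E F G : Fin 4 → ℝ) :
    dom α a β b r E F G = (r ^ 2 / (2 * (α * b - a * β)) - 2) *
      (α * (E 0 * (F 1 * G 2 - F 2 * G 1) - E 1 * (F 0 * G 2 - F 2 * G 0)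
        + E 2 * (F 0 * G 1 - F 1 * G 0))
      + a * (E 0 * (F 1 * G 3 - F 3 * G 1) - E 1 * (F 0 * G 3 - F 3 * G 0)
        + E 3 * (F 0 * G 1 - F 1 * G 0))) := by
  simp [dom, om, ip, Jm, bk]
  generalize α * b - a * β = D at *
  field_simp
  ring

theorem g5_almostKaehler_iff (α a β b r : ℝ) (hd : α * b - a * β ≠ 0) (hr : r ≠ 0) :
    (∀ E F G : Fin 4 → ℝ, dom α a β b r E F G = 0) ↔
    r ^ 2 = 4 * (α * b - a * β) := by
  have h2 : (r ^ 2 / (2 * (α * b - a * β)) - 2 = 0) ↔ r ^ 2 = 4 * (α * b - a * β) := by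
    rw [sub_eq_zero, div_eq_iff (mul_ne_zero two_ne_zero hd)]
    constructor <;> intro h <;> linarith
  rw [← h2]
  constructor
  · intro h
    have e1 := h ![1, 0, 0, 0] ![0, 1, 0, 0] ![0, 0, 1, 0]
    have e2 := h ![1, 0, 0, 0] ![0, 1, 0, 0] ![0, 0, 0, 1]
    rw [dom_formula _ _ _ _ _ hd] at e1 e2
    by_contra hk
    have f1 := (mul_eq_zero.mp e1).resolve_left hk
    have f2 := (mul_eq_zero.mp e2).resolve_left hk
    simp at f1 f2
    apply hd
    rw [f1, f2]
    ring
  · intro h E F G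
    rw [dom_formula _ _ _ _ _ hd, h, zero_mul]

end
end

section
/- For the family 𝔤₅(α, a, β, b, r) with αb − aβ ≠ 0 and r ≠ 0, the structure J is integrable, i.e. the Nijenhuis tensor N(E,F) = 0 for all E, F ∈ 𝔤, if and only if a = β and b = −α. -/
noncomputable section

/-- The Nijenhuis tensor of J. -/
def NT (α a β b r : ℝ) (E F : Fin 4 → ℝ) : Fin 4 → ℝ :=
  bk α a β b r E F + Jm (bk α a β b r (Jm E) F) + Jm (bk α a β b r E (Jm F)) -
    bk α a β b r (Jm E) (Jm F)

theorem g5_integrable_iff (α a β b r : ℝ) (hd : α * b - a * β ≠ 0) (hr : r ≠ 0) :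
    (∀ E F : Fin 4 → ℝ, NT α a β b r E F = 0) ↔ (a = β ∧ b = -α) := by
  constructor
  · intro h
    have h2 := congrFun (h ![1, 0, 0, 0] ![0, 0, 1, 0]) 2
    have h3 := congrFun (h ![1, 0, 0, 0] ![0, 0, 1, 0]) 3
    simp [NT, bk, Jm] at h2 h3
    field_simp at h2 h3
    have hd' : b * α - β * a ≠ 0 := by
      intro h0
      apply hd
      linarith
    rw [mul_zero, div_eq_iff hd', zero_mul] at h2 h3
    replace h2 := (mul_eq_zero.mp h2).resolve_left hr
    replace h3 := (mul_eq_zero.mp h3).resolve_left hr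
    have e2 : (β - a) * (α + b) = 0 := by linarith
    have e3 : (α + b) ^ 2 - (β - a) ^ 2 = 0 := by linarith
    rcases mul_eq_zero.mp e2 with e | e
    · rw [e] at e3
      have : α + b = 0 := by
        apply pow_eq_zero_iff (two_ne_zero) |>.mp
        linarith
      constructor <;> linarith
    · rw [e] at e3
      have : β - a = 0 := by
        apply pow_eq_zero_iff (two_ne_zero) |>.mp
        linarith
      constructor <;> linarith
  · rintro ⟨rfl, rfl⟩ E F
    ext i
    fin_cases i <;> simp [NT, bk, Jm] <;> field_simp <;> ring


end
end

section
/- For the family 𝔤₅(α, a, β, b, r) with αb − aβ ≠ 0 and r ≠ 0, the structure J is never Kähler: it is impossible that simultaneously dω(E,F,G) = 0 for all E, F, G ∈ 𝔤 and N(E,F) = 0 for all E, F ∈ 𝔤. -/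
noncomputable section

theorem g5_never_kaehler (α a β b r : ℝ) (hd : α * b - a * β ≠ 0) (hr : r ≠ 0) :
    ¬ ((∀ E F G : Fin 4 → ℝ, dom α a β b r E F G = 0) ∧
      (∀ E F : Fin 4 → ℝ, NT α a β b r E F = 0)) := by
  rintro ⟨h1, h2⟩
  have hZ := h1 ![1, 0, 0, 0] ![0, 1, 0, 0] ![0, 0, 1, 0]
  have hW := h1 ![1, 0, 0, 0] ![0, 1, 0, 0] ![0, 0, 0, 1]
  have hN := h2 ![1, 0, 0, 0] ![0, 0, 1, 0]
  have hN2 := congrFun hN 2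
  have hN3 := congrFun hN 3
  simp [dom, om, ip, Jm, bk] at hZ hW
  simp [NT, Jm, bk] at hN2 hN3
  obtain ⟨D, hD⟩ : ∃ D, D = α * b - a * β := ⟨_, rfl⟩
  rw [← hD] at hd hZ hW hN2 hN3
  have e1 : α * (r ^ 2 - 4 * D) = 0 := by
    field_simp at hZ
    linarith
  have e2 : a * (r ^ 2 - 4 * D) = 0 := by
    field_simp at hW
    linarith
  have e3 : (β - a) * (α + b) = 0 := by
    field_simp at hN2
    apply mul_left_cancel₀ hr
    linarith
  have e4 : (α + b) ^ 2 - (β - a) ^ 2 = 0 := by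
    field_simp at hN3
    apply mul_left_cancel₀ hr
    linarith
  have hq : r ^ 2 - 4 * D = 0 := by
    by_contra hne
    have ha : α = 0 := (mul_eq_zero.mp e1).resolve_right hne
    have ha' : a = 0 := (mul_eq_zero.mp e2).resolve_right hne
    apply hd
    rw [hD, ha, ha']
    ring
  have hb : β = a ∧ α = -b := by
    rcases mul_eq_zero.mp e3 with h | h
    · rw [h] at e4
      have : α + b = 0 := by simpa using e4
      constructor <;> linarith
    · rw [h] at e4
      have : β - a = 0 := by simpa using e4
      constructor <;> linarith
  obtain ⟨rfl, rfl⟩ := hb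
  have : 0 < r ^ 2 := by positivity
  nlinarith [sq_nonneg b, sq_nonneg β]

end
end
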